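/- Let K be a compact metric space and let S and T be positive kernel operators on B_b(K) which are strong Feller, i.e. Sf and Tf are continuous on K for every f ∈ B_b(K). Then the product ST is a compact operator on B_b(K); in particular, the set {STf : f ∈ B_b(K), ‖f‖_∞ ≤ 1} is relatively compact in C(K) with the supremum norm. -/

import Mathlib

open MeasureTheory ProbabilityTheory Filter Topology

variable {K : Type*} [MetricSpace K] [CompactSpace K] [MeasurableSpace K] [BorelSpace K]

/-- `f` belongs to `B_b(K)`: it is Borel measurable and bounded. -/
def IsBb (f : K → ℝ) : Prop := Measurable f ∧ ∃ C : ℝ, ∀ x, |f x| ≤ C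

/-- `T` is a bounded linear operator on `B_b(K)`. -/
def IsBoundedLinearBb (T : (K → ℝ) → K → ℝ) : Prop :=
  (∀ f, IsBb f → IsBb (T f)) ∧
  (∀ f g, IsBb f → IsBb g → T (f + g) = T f + T g) ∧
  (∀ (c : ℝ) (f), IsBb f → T (c • f) = c • T f) ∧
  (∃ C : ℝ, ∀ f, IsBb f → ∀ C' : ℝ, (∀ x, |f x| ≤ C') → ∀ x, |T f x| ≤ C * C')

/-- `T` is a positive operator on `B_b(K)`. -/
def IsPositiveBb (T : (K → ℝ) → K → ℝ) : Prop :=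
  ∀ f, IsBb f → (∀ x, 0 ≤ f x) → ∀ x, 0 ≤ T f x

/-- `T` is a (positive) kernel operator on `B_b(K)`: it is given by integration against a
bounded positive kernel `k` on `K`. -/
def IsKernelOperator (T : (K → ℝ) → K → ℝ) : Prop :=
  ∃ k : Kernel K K, IsFiniteKernel k ∧ ∀ f, IsBb f → ∀ x, T f x = ∫ y, f y ∂(k x)

/-- Integrability of bounded Borel functions. -/
theorem IsBb.integrable {f : K → ℝ} (hf : IsBb f) (μ : Measure K) [IsFiniteMeasure μ] :
    Integrable f μ := by
  obtain ⟨hm, C, hC⟩ := hf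
  exact Integrable.of_bound hm.aestronglyMeasurable C (Eventually.of_forall hC)

/-- A strong Feller kernel has a finite reference measure. -/
theorem exists_reference (k : Kernel K K) [IsFiniteKernel k]
    (hF : ∀ f : K → ℝ, IsBb f → Continuous (fun x => ∫ y, f y ∂(k x))) :
    ∃ μ : Measure K, IsFiniteMeasure μ ∧ ∀ x, k x ≪ μ := by
  obtain ⟨s, hsc, hsd⟩ := TopologicalSpace.exists_countable_dense K
  have : Countable s := hsc.to_subtype
  let ν : Measure K := Measure.sum (fun x : s => k x)
  refine ⟨ν.toFinite, inferInstance, fun x => ?_⟩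
  refine Measure.AbsolutelyContinuous.trans ?_ (absolutelyContinuous_toFinite ν)
  refine Measure.AbsolutelyContinuous.mk fun A hA h0 => ?_
  have h1 : ∀ y : s, k y A = 0 := by
    have := (Measure.sum_apply_eq_zero' hA).1 h0
    exact this
  have hb : IsBb (A.indicator (fun _ => (1 : ℝ))) := by
    refine ⟨measurable_const.indicator hA, 1, fun y => ?_⟩
    by_cases hy : y ∈ A <;> simp [hy]
  have hc := hF _ hb
  have he : ∀ z, ∫ y, A.indicator (fun _ => (1 : ℝ)) y ∂(k z) = (k z).real A := by
    intro z
    exact integral_indicator_one hA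
  have h2 : (fun x => ∫ y, A.indicator (fun _ => (1 : ℝ)) y ∂(k x)) = fun _ => 0 := by
    refine Continuous.ext_on hsd hc continuous_const ?_
    intro y hy
    simp only [he]
    simp [Measure.real, h1 ⟨y, hy⟩]
  have h3 := congrFun h2 x
  simp only [he] at h3
  exact (measureReal_eq_zero_iff).1 h3

/-- The functional on `L¹` given by a function bounded by one. -/
theorem exists_functional (μ : Measure K) [IsFiniteMeasure μ] (f : K → ℝ) (hf : Measurable f)
    (h1 : ∀ x, |f x| ≤ 1) :
    ∃ Φ : StrongDual ℝ (Lp ℝ 1 μ), ‖Φ‖ ≤ 1 ∧ ∀ g : Lp ℝ 1 μ, Φ g = ∫ y, f y * g y ∂μ := by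
  have hi : ∀ g : Lp ℝ 1 μ, Integrable (fun y => f y * g y) μ := fun g =>
    (L1.integrable_coeFn g).bdd_mul hf.aestronglyMeasurable (Eventually.of_forall h1)
  let L : Lp ℝ 1 μ →ₗ[ℝ] ℝ :=
    { toFun := fun g => ∫ y, f y * g y ∂μ
      map_add' := by
        intro g h
        rw [← integral_add (hi g) (hi h)]
        refine integral_congr_ae ?_
        filter_upwards [Lp.coeFn_add g h] with y hy
        rw [hy, Pi.add_apply, mul_add]
      map_smul' := by
        intro c g
        rw [RingHom.id_apply, smul_eq_mul, ← integral_const_mul]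
        refine integral_congr_ae ?_
        filter_upwards [Lp.coeFn_smul c g] with y hy
        rw [hy, Pi.smul_apply, smul_eq_mul]
        ring }
  have hL : ∀ g, ‖L g‖ ≤ 1 * ‖g‖ := by
    intro g
    rw [one_mul, L1.norm_eq_integral_norm]
    refine (norm_integral_le_integral_norm _).trans ?_
    refine integral_mono (hi g).norm (L1.integrable_coeFn g).norm fun y => ?_
    simp only [norm_mul]
    exact mul_le_of_le_one_left (norm_nonneg _) (h1 y)
  exact ⟨L.mkContinuous 1 hL, L.mkContinuous_norm_le zero_le_one hL, fun g => rfl⟩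

/-- Any sequence in the unit ball has a subsequence along which the images under a strong
Feller kernel converge pointwise. -/
theorem exists_pointwise_subseq (k : Kernel K K) [IsFiniteKernel k]
    (hF : ∀ f : K → ℝ, IsBb f → Continuous (fun x => ∫ y, f y ∂(k x)))
    (f : ℕ → K → ℝ) (hf : ∀ n, Measurable (f n)) (h1 : ∀ n x, |f n x| ≤ 1) :
    ∃ φ : ℕ → ℕ, StrictMono φ ∧ ∃ G : K → ℝ,
      ∀ x, Tendsto (fun n => ∫ y, f (φ n) y ∂(k x)) atTop (𝓝 (G x)) := by
  obtain ⟨μ, hμ, hac⟩ := exists_reference k hF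
  choose Φ hΦ1 hΦ using fun n => exists_functional μ (f n) (hf n) (h1 n)
  have : Fact ((1 : ENNReal) ≠ ⊤) := ⟨ENNReal.one_ne_top⟩
  have hsc := WeakDual.isSeqCompact_closedBall ℝ (Lp ℝ 1 μ) 0 1
  obtain ⟨Ψ, -, φ, hφ, hlim⟩ := hsc (x := fun n => StrongDual.toWeakDual (Φ n)) (by
    intro n
    simpa using hΦ1 n)
  let ρ : K → Lp ℝ 1 μ := fun x =>
    (Measure.integrable_toReal_rnDeriv (μ := k x) (ν := μ)).toL1 _
  refine ⟨φ, hφ, fun x => Ψ (ρ x), fun x => ?_⟩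
  have h2 := ((WeakDual.eval_continuous (ρ x)).tendsto Ψ).comp hlim
  refine h2.congr fun n => ?_
  change Φ (φ n) (ρ x) = _
  rw [hΦ, ← integral_rnDeriv_smul (hac x)]
  refine integral_congr_ae ?_
  filter_upwards [Integrable.coeFn_toL1
    (Measure.integrable_toReal_rnDeriv (μ := k x) (ν := μ))] with y hy
  rw [hy, smul_eq_mul, mul_comm]

/-- A strong Feller kernel operator maps bounded pointwise null sequences to uniformly null
sequences. -/
theorem uniform_null (k : Kernel K K) [IsFiniteKernel k]
    (hF : ∀ f : K → ℝ, IsBb f → Continuous (fun x => ∫ y, f y ∂(k x)))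
    (g : ℕ → K → ℝ) (hg : ∀ n, Measurable (g n)) (C : ℝ) (hC : ∀ n x, |g n x| ≤ C)
    (hlim : ∀ x, Tendsto (fun n => g n x) atTop (𝓝 0)) :
    TendstoUniformly (fun n x => ∫ y, g n y ∂(k x)) (fun _ => 0) atTop := by
  let h : ℕ → K → ℝ := fun n x => ⨆ m, |g (n + m) x|
  have hbdd : ∀ n x, BddAbove (Set.range fun m => |g (n + m) x|) := fun n x =>
    ⟨C, by rintro _ ⟨m, rfl⟩; exact hC _ _⟩
  have hle : ∀ n m x, |g (n + m) x| ≤ h n x := fun n m x => le_ciSup (hbdd n x) m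
  have hle0 : ∀ n x, |g n x| ≤ h n x := fun n x => hle n 0 x
  have hnn : ∀ n x, 0 ≤ h n x := fun n x => (abs_nonneg _).trans (hle0 n x)
  have hhC : ∀ n x, h n x ≤ C := fun n x => ciSup_le fun m => hC _ _
  have hhm : ∀ n, Measurable (h n) := fun n => Measurable.iSup fun m => (hg _).abs
  have hhb : ∀ n, IsBb (h n) := fun n =>
    ⟨hhm n, C, fun x => by rw [abs_of_nonneg (hnn n x)]; exact hhC n x⟩
  have hgb : ∀ n, IsBb (g n) := fun n => ⟨hg n, C, hC n⟩
  have hanti : ∀ x, Antitone fun n => h n x := by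
    intro x
    refine antitone_nat_of_succ_le fun n => ciSup_le fun m => ?_
    have := hle n (1 + m) x
    rwa [← add_assoc] at this
  have hh0 : ∀ x, Tendsto (fun n => h n x) atTop (𝓝 0) := by
    intro x
    rw [Metric.tendsto_atTop]
    intro ε hε
    obtain ⟨N, hN⟩ := (Metric.tendsto_atTop.1 (hlim x)) (ε / 2) (half_pos hε)
    refine ⟨N, fun n hn => ?_⟩
    rw [Real.dist_eq, sub_zero, abs_of_nonneg (hnn n x)]
    refine lt_of_le_of_lt (ciSup_le fun m => ?_) (half_lt_self hε)
    have := hN (n + m) (by omega)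
    rw [Real.dist_eq, sub_zero] at this
    exact this.le
  have hU : TendstoUniformly (fun n x => ∫ y, h n y ∂(k x)) (fun _ => 0) atTop := by
    refine Antitone.tendstoUniformly_of_forall_tendsto (fun n => hF _ (hhb n)) ?_
      continuous_const fun x => ?_
    · intro n m hnm x
      exact integral_mono ((hhb m).integrable _) ((hhb n).integrable _) fun y => hanti y hnm
    · have := tendsto_integral_of_dominated_convergence (μ := k x) (F := h) (f := fun _ => 0)
        (fun _ => C) (fun n => (hhm n).aestronglyMeasurable) (integrable_const _)
        (fun n => Eventually.of_forall fun y => by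
          rw [Real.norm_eq_abs, abs_of_nonneg (hnn n y)]; exact hhC n y)
        (Eventually.of_forall hh0)
      simpa using this
  rw [Metric.tendstoUniformly_iff] at hU ⊢
  intro ε hε
  filter_upwards [hU ε hε] with n hn x
  refine lt_of_le_of_lt ?_ (hn x)
  rw [dist_comm, dist_comm (0 : ℝ), Real.dist_eq, Real.dist_eq, sub_zero, sub_zero]
  refine le_trans ?_ (le_abs_self _)
  refine abs_integral_le_integral_abs.trans ?_
  exact integral_mono ((hgb n).integrable _).abs ((hhb n).integrable _) fun y => hle0 n y

/-- the product of two positive strong Feller kernel operators on `B_b(K)` is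
compact: the image of the unit ball of `B_b(K)` under `S ∘ T` is relatively compact in
`C(K)` with the supremum norm. -/
theorem product_strong_feller_compact
    (S T : (K → ℝ) → K → ℝ)
    (hS : IsKernelOperator S) (hT : IsKernelOperator T)
    (hSF : ∀ f : K → ℝ, IsBb f → Continuous (S f))
    (hTF : ∀ f : K → ℝ, IsBb f → Continuous (T f)) :
    IsCompact (closure {g : C(K, ℝ) |
      ∃ f : K → ℝ, IsBb f ∧ (∀ x, |f x| ≤ 1) ∧ ∀ x, g x = S (T f) x}) := by
  obtain ⟨s, hs, hSs⟩ := hS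
  obtain ⟨t, ht, hTt⟩ := hT
  have hSF' : ∀ f : K → ℝ, IsBb f → Continuous (fun x => ∫ y, f y ∂(s x)) := fun f hf =>
    (hSF f hf).congr fun x => hSs f hf x
  have hTF' : ∀ f : K → ℝ, IsBb f → Continuous (fun x => ∫ y, f y ∂(t x)) := fun f hf =>
    (hTF f hf).congr fun x => hTt f hf x
  -- uniform bound for `T`
  obtain ⟨C, hC⟩ : ∃ C : ℝ, ∀ x, (t x).real Set.univ ≤ C :=
    ⟨t.bound.toReal, fun x => ENNReal.toReal_mono t.bound_ne_top (t.measure_le_bound x _)⟩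
  have hTC : ∀ f : K → ℝ, IsBb f → (∀ x, |f x| ≤ 1) → ∀ x, |T f x| ≤ C := by
    intro f hf h1 x
    rw [hTt f hf x]
    refine (norm_integral_le_of_norm_le_const (μ := t x) (f := f) (C := 1)
      (Eventually.of_forall h1)).trans ?_
    rw [one_mul]
    exact hC x
  have key : ∀ u : ℕ → C(K, ℝ), (∀ n, ∃ f : K → ℝ, IsBb f ∧ (∀ x, |f x| ≤ 1) ∧
      ∀ x, u n x = S (T f) x) →
      ∃ a : C(K, ℝ), ∃ φ : ℕ → ℕ, StrictMono φ ∧ Tendsto (u ∘ φ) atTop (𝓝 a) := by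
    intro u hu
    choose f hfb hf1 hfu using hu
    obtain ⟨φ, hφ, G, hG⟩ := exists_pointwise_subseq t hTF' f (fun n => (hfb n).1) hf1
    have hG' : ∀ x, Tendsto (fun n => T (f (φ n)) x) atTop (𝓝 (G x)) := fun x =>
      (hG x).congr fun n => (hTt _ (hfb _) x).symm
    have hTm : ∀ n, Measurable (T (f n)) := fun n => (hTF _ (hfb n)).measurable
    have hTb : ∀ n, IsBb (T (f n)) := fun n => ⟨hTm n, C, hTC _ (hfb n) (hf1 n)⟩
    have hGm : Measurable G :=
      measurable_of_tendsto_metrizable (fun n => hTm (φ n)) (tendsto_pi_nhds.2 hG')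
    have hGC : ∀ x, |G x| ≤ C := fun x =>
      le_of_tendsto (hG' x).abs (Eventually.of_forall fun n => hTC _ (hfb _) (hf1 _) x)
    have hGb : IsBb G := ⟨hGm, C, hGC⟩
    refine ⟨⟨S G, hSF G hGb⟩, φ, hφ, ?_⟩
    have hU := uniform_null s hSF' (fun n => T (f (φ n)) - G) (fun n => (hTm _).sub hGm) (C + C)
      (fun n x => (abs_sub _ _).trans (add_le_add (hTC _ (hfb _) (hf1 _) x) (hGC x)))
      (fun x => by simpa using (hG' x).sub_const (G x))
    rw [ContinuousMap.tendsto_iff_tendstoUniformly]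
    rw [Metric.tendstoUniformly_iff] at hU ⊢
    intro ε hε
    filter_upwards [hU ε hε] with n hn x
    have h2 := hn x
    simp only [Pi.sub_apply] at h2
    rw [integral_sub ((hTb _).integrable _) (hGb.integrable _), ← hSs _ (hTb _), ← hSs _ hGb,
      ← hfu, dist_comm, Real.dist_eq, sub_zero] at h2
    rw [dist_comm, Real.dist_eq]
    exact h2
  rw [isCompact_iff_isSeqCompact]
  intro u hu
  choose v hv huv using fun n => Metric.mem_closure_iff.1 (hu n) (1 / ((n : ℝ) + 1))
    Nat.one_div_pos_of_nat
  obtain ⟨a, φ, hφ, ha⟩ := key v hv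
  refine ⟨a, mem_closure_of_tendsto ha (Eventually.of_forall fun n => hv _), φ, hφ, ?_⟩
  have h0 : Tendsto (fun n => dist (v (φ n)) (u (φ n))) atTop (𝓝 0) := by
    refine squeeze_zero (fun _ => dist_nonneg) (fun n => ?_)
      (tendsto_one_div_add_atTop_nhds_zero_nat.comp hφ.tendsto_atTop)
    rw [dist_comm]
    exact (huv _).le
  exact (tendsto_iff_of_dist h0).1 ha
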